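/- arXiv:1704.03702 — 4 statements merged into one kernel-verified Lean document; each statement's English description precedes it below -/
import Mathlib

section
/- Let 𝕏 ⊆ ℙ^n_K be a 0-dimensional locally Gorenstein Cayley–Bacharach scheme and σ a homogeneous trace map of degree zero of Q^h(R)/L_0. Then the Hilbert function of δ^σ_𝕏 satisfies HF_{δ^σ_𝕏}(i) = 0 for i < r_𝕏, HF_{δ^σ_𝕏}(i) = deg(𝕏) for i ≥ 2r_𝕏, and 0 ≤ HF_{δ^σ_𝕏}(r_𝕏) ≤ ⋯ ≤ HF_{δ^σ_𝕏}(2r_𝕏−1) < HF_{δ^σ_𝕏}(2r_𝕏) = deg(𝕏); in particular the regularity index of δ^σ_𝕏 is exactly 2r_𝕏. -/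
noncomputable section

/-! An algebraic model for a 0-dimensional subscheme `𝕏 ⊆ ℙⁿ_K` whose support avoids
the hyperplane `Z(X₀)`.  The scheme is recorded through the local rings
`𝒪_{𝕏,p_j}` at the points `p_1, …, p_s` of its support, together with the germ map
sending a homogeneous polynomial `F` of degree `i` to the tuple of germs
`(F_{p_1}, …, F_{p_s})`; this is the degree-`i` component of the injection
`ĩ : R → Q^h(R) ≅ ∏_j 𝒪_{𝕏,p_j}[T_j, T_j⁻¹]`, where every graded component of
`Q^h(R)` is identified with `Γ = ∏_j 𝒪_{𝕏,p_j}` by dropping the powers of the `T_j`.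
Since `x₀` has germ `1` at every point, the homogeneous coordinate ring
`R = P/I_𝕏` is faithfully encoded by the chain of subspaces
`R_i ≅ V_i = germ(P_i) ⊆ Γ` (with `V_i ⊆ V_{i+1}`, and `V_i = Γ` for `i ≫ 0`). -/

/-- The data of one (fat) point of a 0-dimensional scheme: a finite local `K`-algebra. -/
structure PointData (K : Type) [Field K] : Type 1 where
  carrier : Type
  [ring : CommRing carrier]
  [alg : Algebra K carrier]
  [loc : IsLocalRing carrier]
  [findim : FiniteDimensional K carrier]

attribute [instance] PointData.ring PointData.alg PointData.loc PointData.findim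

/-- A model of a 0-dimensional subscheme of `ℙⁿ_K`, no point of whose support lies
on `Z(X₀)` (coordinates being chosen so that each point has `X₀`-coordinate 1, the
germ of `x₀` at every point is `1`). -/
structure ZeroDimScheme (K : Type) [Field K] (n : ℕ) : Type 1 where
  /-- the number of points in the support -/
  s : ℕ
  spos : 0 < s
  /-- the local rings `𝒪_{𝕏,p_j}` -/
  pt : Fin s → PointData K
  /-- the germ map: for `F` homogeneous of degree `i` this is the degree-`i`
  component of `ĩ : R → Q^h(R)`, i.e. `F ↦ (F_{p_1}, …, F_{p_s})` -/
  germ : MvPolynomial (Fin (n + 1)) K →ₐ[K] ∀ j, (pt j).carrier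
  /-- the germ of `X₀` at each point is `1` -/
  germ_X0 : germ (MvPolynomial.X 0) = 1
  /-- in all large degrees, the germ map is surjective onto `∏_j 𝒪_{𝕏,p_j}`
  (this characterizes `I_𝕏` as the full homogeneous vanishing ideal of the scheme) -/
  eventually_surj : ∃ N : ℕ, ∀ i, N ≤ i →
    Submodule.map germ.toLinearMap
      (MvPolynomial.homogeneousSubmodule (Fin (n + 1)) K i) = ⊤

namespace ZeroDimScheme

variable {K : Type} [Field K] {n : ℕ}

/-- `Γ = ∏_j 𝒪_{𝕏,p_j}`, the common model for every graded component of `Q^h(R)`. -/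
abbrev Gamma (S : ZeroDimScheme K n) : Type := ∀ j, (S.pt j).carrier

variable (S : ZeroDimScheme K n)

/-- `V i ⊆ Γ` is the image of the degree-`i` component `R_i` of the homogeneous
coordinate ring `R` under (the degree-`i` component of) `ĩ`; we identify `R_i ≅ V i`. -/
def V (i : ℕ) : Submodule K S.Gamma :=
  Submodule.map S.germ.toLinearMap
    (MvPolynomial.homogeneousSubmodule (Fin (n + 1)) K i)

/-- `R_i` for `i : ℤ` (zero in negative degrees). -/
def Vz (i : ℤ) : Submodule K S.Gamma := if 0 ≤ i then S.V i.toNat else ⊥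

/-- `deg 𝕏 = Σ_j dim_K 𝒪_{𝕏,p_j}`. -/
def degX : ℕ := Module.finrank K S.Gamma

/-- The Hilbert function `HF_𝕏(i) = dim_K R_i`. -/
def HF (i : ℕ) : ℕ := Module.finrank K (S.V i)

/-- The Hilbert function on `ℤ`. -/
def HFz (i : ℤ) : ℕ := Module.finrank K (S.Vz i)

/-- The regularity index `r_𝕏`: the least `r` with `HF_𝕏(i) = deg 𝕏` for all `i ≥ r`. -/
def rX : ℕ := sInf {r : ℕ | ∀ i, r ≤ i → S.HF i = S.degX}

/-- `κ_j = dim_K κ(p_j)`, the residue field of `𝕏` at `p_j`. -/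
def kappa (j : Fin S.s) : ℕ :=
  Module.finrank K
    ((S.pt j).carrier ⧸
      Submodule.restrictScalars K (IsLocalRing.maximalIdeal (S.pt j).carrier))

/-- `sj` is a socle element of `𝒪_{𝕏,p_j}`, i.e. `sj ∈ Ann(𝔪_{𝕏,p_j})`.  By
Proposition 1.2, the maximal `p_j`-subschemes `𝕐 ⊆ 𝕏` correspond 1-1 to the ideals
of `Γ` generated by `(0,…,0,sj,0,…,0)` with `sj` a *nonzero* socle element. -/
def IsSocle (j : Fin S.s) (sj : (S.pt j).carrier) : Prop :=
  ∀ b ∈ IsLocalRing.maximalIdeal (S.pt j).carrier, sj * b = 0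

/-- The ideal `U = ⟨(0,…,0,sj,0,…,0)⟩` of `Γ` corresponding to the maximal
`p_j`-subscheme `𝕐` determined by the socle element `sj`; one has `I_{𝕐/𝕏} = ĩ⁻¹(U)`. -/
def sepIdeal (j : Fin S.s) (sj : (S.pt j).carrier) : Submodule K S.Gamma :=
  Submodule.restrictScalars K (Ideal.span {(Pi.single j sj : S.Gamma)})

/-- The degree-`i` component `(I_{𝕐/𝕏})_i = R_i ∩ ĩ⁻¹(U)` of the ideal of the maximal
`p_j`-subscheme `𝕐` (given by the socle element `sj`) in `R`. -/
def IY (j : Fin S.s) (sj : (S.pt j).carrier) (i : ℕ) : Submodule K S.Gamma :=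
  S.V i ⊓ S.sepIdeal j sj

/-- `(I_{𝕐/𝕏})_i` for `i : ℤ`. -/
def IYz (j : Fin S.s) (sj : (S.pt j).carrier) (i : ℤ) : Submodule K S.Gamma :=
  S.Vz i ⊓ S.sepIdeal j sj

/-- The Hilbert function `HF_𝕐(i) = HF_𝕏(i) - dim_K (I_{𝕐/𝕏})_i` of the maximal
`p_j`-subscheme `𝕐` given by the socle element `sj`. -/
def HFY (j : Fin S.s) (sj : (S.pt j).carrier) (i : ℕ) : ℕ :=
  S.HF i - Module.finrank K (S.IY j sj i)

/-- `HF_𝕐` on `ℤ`. -/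
def HFYz (j : Fin S.s) (sj : (S.pt j).carrier) (i : ℤ) : ℕ :=
  S.HFz i - Module.finrank K (S.IYz j sj i)

/-- `α_{𝕐/𝕏} = min {i | (I_{𝕐/𝕏})_i ≠ 0}`. -/
def alphaY (j : Fin S.s) (sj : (S.pt j).carrier) : ℕ :=
  sInf {i : ℕ | S.IY j sj i ≠ ⊥}

/-- `μ(a) = min {i | (0,…,0,a T_j^i,0,…,0) ∈ ĩ(R)}` for `a ∈ 𝒪_{𝕏,p_j}`. -/
def mu (j : Fin S.s) (a : (S.pt j).carrier) : ℕ :=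
  sInf {i : ℕ | (Pi.single j a : S.Gamma) ∈ S.V i}

/-- `μ_{𝕐/𝕏}`, the maximal degree of a minimal separator of the maximal
`p_j`-subscheme `𝕐` given by the socle element `sj`; independently of all choices it
equals `max {μ(a·sj) | a ∈ 𝒪_{𝕏,p_j}, a·sj ≠ 0}`. -/
def muY (j : Fin S.s) (sj : (S.pt j).carrier) : ℕ :=
  sSup {m : ℕ | ∃ a : (S.pt j).carrier, a * sj ≠ 0 ∧ m = S.mu j (a * sj)}

/-- `deg_𝕏(p_j) = min {μ_{𝕐/𝕏} | 𝕐 a maximal p_j-subscheme of 𝕏}`. -/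
def degP (j : Fin S.s) : ℕ :=
  sInf {m : ℕ | ∃ sj : (S.pt j).carrier, S.IsSocle j sj ∧ sj ≠ 0 ∧ m = S.muY j sj}

/-- `𝕏` has the Cayley–Bacharach property of degree `d`: `deg_𝕏(p_j) ≥ d + 1` for all `j`. -/
def CBP (d : ℕ) : Prop := ∀ j : Fin S.s, d + 1 ≤ S.degP j

/-- `𝕏` is a Cayley–Bacharach scheme: it has `CBP(r_𝕏 - 1)`. -/
def CayleyBacharach : Prop := S.CBP (S.rX - 1)

/-- The residue class map `𝒪_{𝕏,p_j} → κ(p_j)` as a `K`-linear map. -/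
def resQ (j : Fin S.s) :
    (S.pt j).carrier →ₗ[K]
      ((S.pt j).carrier ⧸
        Submodule.restrictScalars K (IsLocalRing.maximalIdeal (S.pt j).carrier)) :=
  (Submodule.restrictScalars K (IsLocalRing.maximalIdeal (S.pt j).carrier)).mkQ

/-- The residue classes of `e 0, …, e (κ_j - 1)` form a `K`-basis of `κ(p_j)`. -/
def IsResidueBasis (j : Fin S.s) {m : ℕ} (e : Fin m → (S.pt j).carrier) : Prop :=
  LinearIndependent K (fun k => S.resQ j (e k)) ∧
    Submodule.span K (Set.range fun k => S.resQ j (e k)) = ⊤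

/-- A family `τ_j : 𝒪_{𝕏,p_j} → K` of trace maps: each `τ_j` is a generator of
`Hom_K(𝒪_{𝕏,p_j}, K)` as an `𝒪_{𝕏,p_j}`-module.  Such a family exists iff `𝕏` is
locally Gorenstein, and it induces a homogeneous trace map `σ` of degree zero of
`Q^h(R)/L₀` (componentwise). -/
def IsTraceFamily (τ : ∀ j, (S.pt j).carrier →ₗ[K] K) : Prop :=
  ∀ j, Function.Bijective
    (fun a : (S.pt j).carrier => (τ j).comp (LinearMap.mulRight K a))

/-- The total trace `Γ → K`, `y ↦ Σ_j τ_j (y_j)`; on the degree-`i` component of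
`Q^h(R)` the trace map `σ` is `q ↦ (Ttot τ q)·x₀^i`. -/
def Ttot (τ : ∀ j, (S.pt j).carrier →ₗ[K] K) : S.Gamma →ₗ[K] K :=
  ∑ j : Fin S.s, (τ j).comp (LinearMap.proj j)

/-- The degree-`k` component `(𝔠^σ_𝕏)_k ⊆ Q^h(R)_k ≅ Γ` of the Dedekind complementary
module: `g ∈ (𝔠^σ_𝕏)_k` iff `σ(g · R) ⊆ K[x₀]`, i.e. `Ttot τ (g·x) = 0` whenever
`x ∈ R_i` with `k + i < 0`. -/
def Cmod (τ : ∀ j, (S.pt j).carrier →ₗ[K] K) (k : ℤ) : Submodule K S.Gamma :=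
  ⨅ (i : ℕ) (_ : k + (i : ℤ) < 0) (x : S.Gamma) (_ : x ∈ S.V i),
    LinearMap.ker ((S.Ttot τ).comp (LinearMap.mulRight K x))

/-- The degree-`i` component `(δ^σ_𝕏)_i ⊆ Q^h(R)_i ≅ Γ` of the Dedekind different
`δ^σ_𝕏 = {f ∈ Q^h(R) | f · 𝔠^σ_𝕏 ⊆ R}`. -/
def delta (τ : ∀ j, (S.pt j).carrier →ₗ[K] K) (i : ℤ) : Submodule K S.Gamma :=
  ⨅ (k : ℤ) (g : S.Gamma) (_ : g ∈ S.Cmod τ k),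
    Submodule.comap (LinearMap.mulRight K g) (S.Vz (i + k))

/-- The Hilbert function of the Dedekind different. -/
def HFdelta (τ : ∀ j, (S.pt j).carrier →ₗ[K] K) (i : ℤ) : ℕ :=
  Module.finrank K (S.delta τ i)

/-- `𝕏` has minimal Dedekind different: `δ^σ_𝕏 = ⊕_{i ≥ 2 r_𝕏} R_i`
(recall `R_i ≅ Γ` for `i ≥ r_𝕏`). -/
def MinimalDedekind (τ : ∀ j, (S.pt j).carrier →ₗ[K] K) : Prop :=
  ∀ i : ℤ, S.delta τ i = if 2 * (S.rX : ℤ) ≤ i then ⊤ else ⊥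

/-- The degree-`i` component (`i ≥ 0`) of the conductor
`𝔉_{R̃/R} = {f ∈ R̃ | f·R̃ ⊆ R}` of `R` in `R̃ = ∏_j 𝒪_{𝕏,p_j}[T_j]`
(whose degree-`i` component is all of `Γ` for every `i ≥ 0`). -/
def cond (i : ℕ) : Submodule K S.Gamma :=
  ⨅ y : S.Gamma, Submodule.comap (LinearMap.mulRight K y) (S.V i)

/-- The conductor on `ℤ` (zero in negative degrees, where `R̃` vanishes). -/
def condZ (i : ℤ) : Submodule K S.Gamma := if 0 ≤ i then S.cond i.toNat else ⊥

/-- The degree-`i` component of the trace `tr(𝔠^σ_𝕏) = δ^σ_𝕏 · 𝔠^σ_𝕏` of the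
Dedekind complementary module. -/
def trC (τ : ∀ j, (S.pt j).carrier →ₗ[K] K) (i : ℤ) : Submodule K S.Gamma :=
  ⨆ (a : ℤ) (b : ℤ) (_ : a + b = i), S.delta τ a * S.Cmod τ b

/-- `𝕏` is nearly Gorenstein: `𝔪 ⊆ tr(𝔠^σ_𝕏)`. -/
def NearlyGorenstein (τ : ∀ j, (S.pt j).carrier →ₗ[K] K) : Prop :=
  ∀ i : ℤ, 1 ≤ i → S.Vz i ≤ S.trC τ i

/-- `𝕏` is almost Gorenstein: there is an exact sequence of graded `R`-modules
`0 → R → 𝔠^σ_𝕏(-r_𝕏) → C → 0` with `𝔪·C = 0`.  A degree-zero graded injection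
`R → 𝔠^σ_𝕏(-r_𝕏)` is multiplication by an element `g ∈ (𝔠^σ_𝕏)_{-r_𝕏}` with
`Ann_R(g) = 0`, and `𝔪·C = 0` means `𝔪 · 𝔠^σ_𝕏(-r_𝕏) ⊆ g·R`. -/
def AlmostGorenstein (τ : ∀ j, (S.pt j).carrier →ₗ[K] K) : Prop :=
  ∃ g ∈ S.Cmod τ (-(S.rX : ℤ)),
    (∀ i : ℕ, ∀ x ∈ S.V i, x * g = 0 → x = 0) ∧
    (∀ a : ℕ, 1 ≤ a → ∀ x ∈ S.V a, ∀ k : ℤ, ∀ h ∈ S.Cmod τ k,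
      x * h ∈ Submodule.map (LinearMap.mulRight K g) (S.Vz ((a : ℤ) + k + (S.rX : ℤ))))

/-- `𝕏` is arithmetically Gorenstein, i.e. `R` is a Gorenstein ring; equivalently the
canonical module is free of rank one: `𝔠^σ_𝕏 = g·R` for some `g ∈ (𝔠^σ_𝕏)_{-r_𝕏}`. -/
def ArithGorenstein (τ : ∀ j, (S.pt j).carrier →ₗ[K] K) : Prop :=
  ∃ g ∈ S.Cmod τ (-(S.rX : ℤ)),
    ∀ k : ℤ, S.Cmod τ k = Submodule.map (LinearMap.mulRight K g) (S.Vz (k + (S.rX : ℤ)))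

/-- `𝕏` is level: the socle of `R̄ = R/⟨x₀⟩` equals `R̄_{r_𝕏}`, i.e. no nonzero
homogeneous element of `R̄` of degree `< r_𝕏` is annihilated by `𝔪̄` (recall
`R̄_i ≅ V i / V (i-1)` and `x₀`-multiplication preserves germs). -/
def Level : Prop :=
  ∀ i : ℕ, i < S.rX → ∀ x ∈ S.V i,
    (∀ a : ℕ, 1 ≤ a → ∀ y ∈ S.V a, x * y ∈ S.Vz ((i : ℤ) + (a : ℤ) - 1)) →
      x ∈ S.Vz ((i : ℤ) - 1)

/-- The subspace `{x ∈ Γ | x_k = 0 for k ≠ j}` of `Γ`: the degreewise model for the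
ideal of the subscheme `𝕐_j ⊆ 𝕏` with `I_{𝕐_j} = ∩_{k ≠ j} I_k`. -/
def Wj (j : Fin S.s) : Submodule K S.Gamma :=
  ⨅ (k : Fin S.s) (_ : k ≠ j),
    LinearMap.ker (LinearMap.proj k : S.Gamma →ₗ[K] (S.pt k).carrier)

/-- `(I_{𝕐_j/𝕏})_i` for the subscheme `𝕐_j` complementary to `p_j`. -/
def IW (j : Fin S.s) (i : ℕ) : Submodule K S.Gamma := S.V i ⊓ S.Wj j

/-- The Hilbert function of the subscheme `𝕐_j` complementary to `p_j`. -/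
def HFW (j : Fin S.s) (i : ℕ) : ℕ := S.HF i - Module.finrank K (S.IW j i)

/-- `α_{𝕐_j/𝕏}` for the subscheme `𝕐_j` complementary to `p_j`. -/
def alphaW (j : Fin S.s) : ℕ := sInf {i : ℕ | S.IW j i ≠ ⊥}

/-- The subspace `{x ∈ Γ | x_k = 0 for k ∉ {j₁, j₂}}` of `Γ`: the degreewise model for
the ideal in `R` of the subscheme of the reduced scheme `𝕏` complementary to `{p_{j₁}, p_{j₂}}`. -/
def Wpair (j1 j2 : Fin S.s) : Submodule K S.Gamma :=
  ⨅ (k : Fin S.s) (_ : k ≠ j1) (_ : k ≠ j2),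
    LinearMap.ker (LinearMap.proj k : S.Gamma →ₗ[K] (S.pt k).carrier)

/-- The homogeneous vanishing ideal `I_𝕏 ⊆ P`. -/
def IX : Ideal (MvPolynomial (Fin (n + 1)) K) :=
  Ideal.span {F | (∃ i : ℕ, F ∈ MvPolynomial.homogeneousSubmodule (Fin (n + 1)) K i) ∧
    S.germ F = 0}

/-- The `n×n`-minor (Jacobian determinant with respect to `X_1, …, X_n`) of an
`n`-tuple of polynomials. -/
def jacMinor (Fs : Fin n → MvPolynomial (Fin (n + 1)) K) : MvPolynomial (Fin (n + 1)) K :=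
  Matrix.det (Matrix.of fun a b : Fin n => MvPolynomial.pderiv (Fin.succ b) (Fs a))

/-- The preimage in `P` of the Kähler different `ϑ_𝕏 ⊆ R`: the ideal generated by
`I_𝕏` together with all `n×n` minors of the Jacobian matrix of elements of `I_𝕏`. -/
def KaehlerIdeal : Ideal (MvPolynomial (Fin (n + 1)) K) :=
  S.IX ⊔ Ideal.span {m | ∃ Fs : Fin n → MvPolynomial (Fin (n + 1)) K,
    (∀ a, Fs a ∈ S.IX) ∧ m = jacMinor Fs}

/-- The degree-`i` component of the Kähler different `ϑ_𝕏 ⊆ R`, viewed inside `Γ`. -/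
def thetaPiece (i : ℕ) : Submodule K S.Gamma :=
  Submodule.map S.germ.toLinearMap
    (Submodule.restrictScalars K S.KaehlerIdeal ⊓
      MvPolynomial.homogeneousSubmodule (Fin (n + 1)) K i)

end ZeroDimScheme

end

namespace ZeroDimScheme

variable {K : Type} [Field K] {n : ℕ} (S : ZeroDimScheme K n)

theorem aux_V_mono : Monotone S.V := by
  refine monotone_nat_of_le_succ fun i => ?_
  rintro _ ⟨F, hF, rfl⟩
  refine ⟨F * MvPolynomial.X 0, ?_, ?_⟩
  · have h1 : F.IsHomogeneous i := hF
    exact h1.mul (MvPolynomial.isHomogeneous_X K 0)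
  · simp [S.germ_X0]

theorem aux_Vz_mono : Monotone S.Vz := by
  intro a b hab
  unfold Vz
  split_ifs with h1 h2
  · exact S.aux_V_mono (by omega)
  · omega
  · exact bot_le
  · exact le_rfl

theorem aux_V_top (i : ℕ) (hi : S.rX ≤ i) : S.V i = ⊤ := by
  have hne : {r : ℕ | ∀ i, r ≤ i → S.HF i = S.degX}.Nonempty := by
    obtain ⟨N, hN⟩ := S.eventually_surj
    refine ⟨N, fun i hi => ?_⟩
    have : S.V i = ⊤ := hN i hi
    unfold HF degX
    rw [this]
    exact finrank_top K S.Gamma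
  exact Submodule.eq_top_of_finrank_eq (Nat.sInf_mem hne i hi)

theorem aux_socle (j : Fin S.s) (a : (S.pt j).carrier) (ha : a ≠ 0) :
    ∃ c, S.IsSocle j (c * a) ∧ c * a ≠ 0 := by
  have : IsArtinianRing (S.pt j).carrier := IsArtinianRing.of_finite K _
  have hne : Ideal.span {a} ≠ ⊥ := by simpa using ha
  obtain ⟨I, hI, hIa⟩ := (IsAtomic.eq_bot_or_exists_atom_le (Ideal.span {a})).resolve_left hne
  obtain ⟨s, hs, hs0⟩ := Submodule.exists_mem_ne_zero_of_ne_bot hI.1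
  obtain ⟨c, rfl⟩ := Ideal.mem_span_singleton'.1 (hIa hs)
  refine ⟨c, fun b hb => ?_, hs0⟩
  by_contra hne
  have hmem : c * a * b ∈ I := I.mul_mem_right b hs
  have hle : Ideal.span {c * a * b} ≤ I := by
    rw [Ideal.span_le]; simpa using hmem
  have heq : Ideal.span {c * a * b} = I := by
    rcases hI.le_iff.1 hle with h | h
    · exact absurd (by simpa using h) hne
    · exact h
  rw [← heq] at hs
  obtain ⟨d, hd⟩ := Ideal.mem_span_singleton'.1 hs
  have hu : IsUnit (1 - d * b) := by
    by_contra hnu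
    have h1 : (1 - d * b) ∈ IsLocalRing.maximalIdeal (S.pt j).carrier := hnu
    have h2 := Ideal.mul_mem_left _ d hb
    have h3 := Ideal.add_mem _ h1 h2
    rw [sub_add_cancel] at h3
    exact (Ideal.ne_top_iff_one _).1 (IsLocalRing.maximalIdeal.isMaximal _).ne_top h3
  apply hs0
  rw [← hu.mul_left_eq_zero]
  linear_combination -hd

theorem aux_CB (hCB : S.CayleyBacharach) (f : S.Gamma)
    (hf : ∀ y, f * y ∈ S.V (S.rX - 1)) : f = 0 := by
  by_contra hne
  obtain ⟨j, hj⟩ := Function.ne_iff.1 hne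
  obtain ⟨c, hs, hs0⟩ := S.aux_socle j (f j) hj
  have h1 : S.degP j ≤ S.muY j (c * f j) := Nat.sInf_le ⟨_, hs, hs0, rfl⟩
  have h2 : S.muY j (c * f j) ≤ S.rX - 1 := by
    refine csSup_le' ?_
    rintro m ⟨a, -, rfl⟩
    refine Nat.sInf_le ?_
    have h := hf (Pi.single j (a * c))
    have e : f * (Pi.single j (a * c) : S.Gamma) = Pi.single j (a * (c * f j)) := by
      funext k
      by_cases hk : k = j
      · subst hk
        simp; ring
      · simp [hk]
    rw [e] at h
    exact h
  have h3 := hCB j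
  omega

theorem aux_Ttot_single (τ : ∀ j, (S.pt j).carrier →ₗ[K] K) (g : S.Gamma) (j : Fin S.s)
    (a : (S.pt j).carrier) :
    S.Ttot τ (g * (Pi.single j a : S.Gamma)) = τ j (g j * a) := by
  have e : g * (Pi.single j a : S.Gamma) = Pi.single j (g j * a) := by
    funext k
    by_cases hk : k = j
    · subst hk
      simp
    · simp [hk]
  rw [e]
  simp only [Ttot, LinearMap.sum_apply, LinearMap.comp_apply, LinearMap.proj_apply]
  rw [Finset.sum_eq_single j]
  · simp
  · intro k _ hk
    simp [hk]
  · simp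

theorem aux_nondeg (τ : ∀ j, (S.pt j).carrier →ₗ[K] K) (hτ : S.IsTraceFamily τ) (g : S.Gamma)
    (h : ∀ x, S.Ttot τ (g * x) = 0) : g = 0 := by
  funext j
  apply (hτ j).1
  ext a
  have := h (Pi.single j a)
  rw [aux_Ttot_single] at this
  simpa [mul_comm] using this

theorem aux_repr (τ : ∀ j, (S.pt j).carrier →ₗ[K] K) (hτ : S.IsTraceFamily τ)
    (φ : S.Gamma →ₗ[K] K) : ∃ g : S.Gamma, ∀ x, S.Ttot τ (g * x) = φ x := by
  choose g hg using fun j => (hτ j).2 (φ.comp (LinearMap.single K (fun j => (S.pt j).carrier) j))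
  refine ⟨g, fun x => ?_⟩
  have : (S.Ttot τ).comp (LinearMap.mulLeft K (g : S.Gamma)) = φ := by
    refine LinearMap.pi_ext fun j a => ?_
    have h := LinearMap.congr_fun (hg j) a
    have h2 := S.aux_Ttot_single τ g j a
    simp only [LinearMap.comp_apply, LinearMap.mulLeft_apply, LinearMap.mulRight_apply,
      LinearMap.single_apply] at h ⊢
    rw [h2, mul_comm, h]
  exact LinearMap.congr_fun this x

theorem aux_mem_C (τ : ∀ j, (S.pt j).carrier →ₗ[K] K) (k : ℤ) (g : S.Gamma) :
    g ∈ S.Cmod τ k ↔ ∀ i : ℕ, k + (i : ℤ) < 0 → ∀ x ∈ S.V i, S.Ttot τ (g * x) = 0 := by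
  simp [Cmod, Submodule.mem_iInf]

theorem aux_mem_delta (τ : ∀ j, (S.pt j).carrier →ₗ[K] K) (i : ℤ) (f : S.Gamma) :
    f ∈ S.delta τ i ↔ ∀ k : ℤ, ∀ g ∈ S.Cmod τ k, f * g ∈ S.Vz (i + k) := by
  simp [delta, Submodule.mem_iInf]

theorem aux_notMem (τ : ∀ j, (S.pt j).carrier →ₗ[K] K) (hτ : S.IsTraceFamily τ)
    (x : S.Gamma) (hx : x ∉ S.V (S.rX - 1)) :
    ∃ g ∈ S.Cmod τ (-(S.rX : ℤ)), S.Ttot τ (g * x) ≠ 0 := by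
  obtain ⟨φ, h1, h2⟩ := Submodule.exists_le_ker_of_notMem hx
  obtain ⟨g, hg⟩ := S.aux_repr τ hτ φ
  refine ⟨g, (S.aux_mem_C τ _ g).2 fun i hi y hy => ?_, by rwa [hg]⟩
  rw [hg]
  exact h2 (S.aux_V_mono (by omega) hy)

end ZeroDimScheme

/-- Proposition 4.8 / `propSec3.8`.  Let `𝕏 ⊆ ℙⁿ_K` be a
0-dimensional locally Gorenstein Cayley–Bacharach scheme and `σ` a homogeneous trace
map of degree zero of `Q^h(R)/L₀`.  Then the Hilbert function of `δ^σ_𝕏` satisfies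
`HF_{δ^σ_𝕏}(i) = 0` for `i < r_𝕏`, `HF_{δ^σ_𝕏}(i) = deg 𝕏` for `i ≥ 2 r_𝕏`, and
`0 ≤ HF_{δ^σ_𝕏}(r_𝕏) ≤ ⋯ ≤ HF_{δ^σ_𝕏}(2r_𝕏 - 1) < HF_{δ^σ_𝕏}(2r_𝕏) = deg 𝕏`;
in particular the regularity index of `δ^σ_𝕏` is exactly `2 r_𝕏`. -/
theorem dedekind_CB_stmt7 (K : Type) [Field K] (n : ℕ) (S : ZeroDimScheme K n)
    (τ : ∀ j, (S.pt j).carrier →ₗ[K] K) (hτ : S.IsTraceFamily τ)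
    (hCB : S.CayleyBacharach) :
    (∀ i : ℤ, i < (S.rX : ℤ) → S.HFdelta τ i = 0) ∧
    (∀ i : ℤ, 2 * (S.rX : ℤ) ≤ i → S.HFdelta τ i = S.degX) ∧
    (∀ i : ℤ, (S.rX : ℤ) ≤ i → i < 2 * (S.rX : ℤ) →
      S.HFdelta τ i ≤ S.HFdelta τ (i + 1)) ∧
    S.HFdelta τ (2 * (S.rX : ℤ) - 1) < S.degX := by
  have hone : (1 : S.Gamma) ≠ 0 := fun h =>
    one_ne_zero (α := (S.pt ⟨0, S.spos⟩).carrier) (congrFun h ⟨0, S.spos⟩)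
  have hr : 1 ≤ S.rX := by
    by_contra h
    refine hone (S.aux_CB hCB 1 fun y => ?_)
    rw [S.aux_V_top _ (by omega)]
    trivial
  refine ⟨fun i hi => ?_, fun i hi => ?_, fun i _ _ => ?_, ?_⟩
  · have : S.delta τ i = ⊥ := by
      rw [eq_bot_iff]
      intro f hf
      rw [S.aux_mem_delta] at hf
      refine (Submodule.mem_bot K).2 (S.aux_CB hCB f fun y => ?_)
      by_contra hy
      obtain ⟨g, hg, hg0⟩ := S.aux_notMem τ hτ _ hy
      have h := hf _ g hg
      rw [ZeroDimScheme.Vz, if_neg (by omega), Submodule.mem_bot] at h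
      apply hg0
      rw [← mul_assoc, mul_comm g f, h, zero_mul, map_zero]
    rw [ZeroDimScheme.HFdelta, this]
    exact finrank_bot K S.Gamma
  · have : S.delta τ i = ⊤ := by
      rw [eq_top_iff]
      intro f _
      rw [S.aux_mem_delta]
      intro k g hg
      by_cases hk : k + (S.rX : ℤ) < 0
      · have : g = 0 := by
          refine S.aux_nondeg τ hτ g fun x => (S.aux_mem_C τ k g).1 hg S.rX hk x ?_
          rw [S.aux_V_top _ le_rfl]
          trivial
        rw [this, mul_zero]
        exact Submodule.zero_mem _
      · rw [ZeroDimScheme.Vz, if_pos (by omega), S.aux_V_top _ (by omega)]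
        trivial
    rw [ZeroDimScheme.HFdelta, this]
    exact finrank_top K S.Gamma
  · refine Submodule.finrank_mono fun f hf => ?_
    rw [S.aux_mem_delta] at hf ⊢
    exact fun k g hg => S.aux_Vz_mono (by omega) (hf k g hg)
  · refine Submodule.finrank_lt fun htop => ?_
    have hx : ∃ x, x ∉ S.V (S.rX - 1) := by
      by_contra! h
      exact hone (S.aux_CB hCB 1 fun y => h _)
    obtain ⟨x, hx⟩ := hx
    obtain ⟨g, hg, hg0⟩ := S.aux_notMem τ hτ x hx
    apply hg0
    have : g = 0 := by
      refine S.aux_CB hCB g fun y => ?_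
      have hy : y ∈ S.delta τ (2 * (S.rX : ℤ) - 1) := by rw [htop]; trivial
      have h := (S.aux_mem_delta τ _ y).1 hy _ g hg
      rw [ZeroDimScheme.Vz, if_pos (by omega)] at h
      rw [mul_comm]
      exact S.aux_V_mono (by omega) h
    rw [this, zero_mul, map_zero]
end

section
/- Let 𝕏 ⊆ ℙ^n_K be a 0-dimensional locally Gorenstein scheme, 0 ≤ d ≤ r_𝕏 − 1, and σ a homogeneous trace map of degree zero of Q^h(R)/L_0. If for every p_j ∈ Supp(𝕏) every maximal p_j-subscheme 𝕐_j ⊆ 𝕏 satisfies x_0^d·(I_{𝕐_j/𝕏})_{r_𝕏} ⊄ (δ^σ_𝕏)_{r_𝕏+d}, then 𝕏 has CBP(d). In particular, if HF_{δ^σ_𝕏}(r_𝕏 + d) = 0, then 𝕏 has CBP(d). -/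
namespace ZeroDimScheme

theorem aux_V_succ {K : Type} [Field K] {n : ℕ} (S : ZeroDimScheme K n) (i : ℕ) :
    S.V i ≤ S.V (i + 1) := by
  rintro x ⟨F, hF, rfl⟩
  refine ⟨F * MvPolynomial.X 0, ?_, ?_⟩
  · exact MvPolynomial.IsHomogeneous.mul hF (MvPolynomial.isHomogeneous_X K 0)
  · simp [S.germ_X0]

theorem aux_V_mono_s8 {K : Type} [Field K] {n : ℕ} (S : ZeroDimScheme K n) : Monotone S.V :=
  monotone_nat_of_le_succ S.aux_V_succ

theorem aux_V_rX {K : Type} [Field K] {n : ℕ} (S : ZeroDimScheme K n) : S.V S.rX = ⊤ := by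
  have hne : {r : ℕ | ∀ i, r ≤ i → S.HF i = S.degX}.Nonempty := by
    obtain ⟨N, hN⟩ := S.eventually_surj
    refine ⟨N, fun i hi => ?_⟩
    have h : S.V i = ⊤ := hN i hi
    simp only [HF, degX]
    rw [h, finrank_top]
  have h := Nat.sInf_mem hne S.rX le_rfl
  exact Submodule.eq_top_of_finrank_eq h

theorem aux_socle_s8 {K : Type} [Field K] {n : ℕ} (S : ZeroDimScheme K n) (j : Fin S.s) :
    ∃ sj : (S.pt j).carrier, S.IsSocle j sj ∧ sj ≠ 0 := by
  classical
  have : IsArtinianRing (S.pt j).carrier := IsArtinianRing.of_finite K _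
  have hnil : ∃ k : ℕ, (IsLocalRing.maximalIdeal (S.pt j).carrier) ^ k = 0 := by
    have h := IsArtinianRing.isNilpotent_jacobson_bot (R := (S.pt j).carrier)
    rw [IsLocalRing.jacobson_eq_maximalIdeal ⊥ bot_ne_top] at h
    exact h
  have hk := Nat.find_spec hnil
  have hpos : Nat.find hnil ≠ 0 := by
    intro h0
    rw [h0, pow_zero, Ideal.one_eq_top] at hk
    exact bot_ne_top hk.symm
  obtain ⟨m, hm⟩ := Nat.exists_eq_succ_of_ne_zero hpos
  have hlt : (IsLocalRing.maximalIdeal (S.pt j).carrier) ^ m ≠ ⊥ :=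
    Nat.find_min hnil (m := m) (by omega)
  obtain ⟨x, hx, hx0⟩ := Submodule.exists_mem_ne_zero_of_ne_bot hlt
  refine ⟨x, fun b hb => ?_, hx0⟩
  have h2 := Ideal.mul_mem_mul hx hb
  rw [← pow_succ, ← Nat.succ_eq_add_one, ← hm, hk] at h2
  exact h2

theorem aux_nondeg_s8 {K : Type} [Field K] {n : ℕ} (S : ZeroDimScheme K n)
    (τ : ∀ j, (S.pt j).carrier →ₗ[K] K) (hτ : S.IsTraceFamily τ)
    (k : ℤ) (hk : k + (S.rX : ℤ) < 0) (g : S.Gamma) (hg : g ∈ S.Cmod τ k) : g = 0 := by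
  classical
  have h : ∀ x : S.Gamma, S.Ttot τ (g * x) = 0 := by
    intro x
    simp only [Cmod, Submodule.mem_iInf] at hg
    exact hg S.rX hk x (by rw [S.aux_V_rX]; trivial)
  funext j
  apply (hτ j).1
  ext b
  have h2 := h (Pi.single j b)
  have h3 : S.Ttot τ (g * Pi.single j b) = τ j (g j * b) := by
    simp only [Ttot, LinearMap.sum_apply, LinearMap.comp_apply, LinearMap.proj_apply,
      Pi.mul_apply]
    rw [Finset.sum_eq_single j]
    · simp
    · intro i _ hi
      simp [Pi.single_eq_of_ne hi]
    · simp
  rw [h3] at h2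
  simp [mul_comm b, h2]

theorem aux_main {K : Type} [Field K] {n : ℕ} (S : ZeroDimScheme K n)
    (τ : ∀ j, (S.pt j).carrier →ₗ[K] K) (hτ : S.IsTraceFamily τ) (d : ℕ)
    (H : ∀ (j : Fin S.s) (sj : (S.pt j).carrier), S.IsSocle j sj → sj ≠ 0 →
        ¬ (S.IY j sj S.rX ≤ S.delta τ ((S.rX : ℤ) + (d : ℤ)))) : S.CBP d := by
  classical
  intro j
  have hne : {m : ℕ | ∃ sj : (S.pt j).carrier,
      S.IsSocle j sj ∧ sj ≠ 0 ∧ m = S.muY j sj}.Nonempty := by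
    obtain ⟨x, h1, h2⟩ := S.aux_socle_s8 j
    exact ⟨_, x, h1, h2, rfl⟩
  obtain ⟨sj, h1, h2, h3⟩ := Nat.sInf_mem hne
  change S.degP j = _ at h3
  by_contra hlt
  rw [h3] at hlt
  apply H j sj h1 h2
  have hmem : ∀ a : (S.pt j).carrier, (Pi.single j a : S.Gamma) ∈ S.V S.rX := by
    intro a; rw [S.aux_V_rX]; trivial
  have hV : ∀ a : (S.pt j).carrier, (Pi.single j (a * sj) : S.Gamma) ∈ S.V d := by
    intro a
    by_cases ha : a * sj = 0
    · rw [ha, Pi.single_zero]; exact zero_mem _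
    · have hb : BddAbove {m : ℕ | ∃ a : (S.pt j).carrier,
          a * sj ≠ 0 ∧ m = S.mu j (a * sj)} := by
        refine ⟨S.rX, ?_⟩
        rintro m ⟨b, -, rfl⟩
        exact Nat.sInf_le (hmem _)
      have hle : S.mu j (a * sj) ≤ S.muY j sj := le_csSup hb ⟨a, ha, rfl⟩
      have hin : (Pi.single j (a * sj) : S.Gamma) ∈ S.V (S.mu j (a * sj)) :=
        Nat.sInf_mem (s := {i : ℕ | (Pi.single j (a * sj) : S.Gamma) ∈ S.V i}) ⟨_, hmem _⟩
      exact S.aux_V_mono_s8 (by omega) hin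
  have hU : ∀ u ∈ S.sepIdeal j sj, ∀ g : S.Gamma, u * g ∈ S.V d := by
    intro u hu g
    obtain ⟨c, rfl⟩ := Ideal.mem_span_singleton'.1 hu
    have : c * Pi.single j sj * g = (Pi.single j (g j * c j * sj) : S.Gamma) := by
      funext i
      by_cases hi : i = j
      · subst hi; simp; ring
      · simp [Pi.single_eq_of_ne hi]
    rw [this]
    exact hV _
  intro u hu
  simp only [delta, Submodule.mem_iInf]
  intro k g hg
  change u * g ∈ S.Vz _
  by_cases hk : k + (S.rX : ℤ) < 0
  · rw [S.aux_nondeg_s8 τ hτ k hk g hg, mul_zero]; exact zero_mem _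
  · have h0 : (0 : ℤ) ≤ (S.rX : ℤ) + d + k := by omega
    rw [Vz, if_pos h0]
    exact S.aux_V_mono_s8 (by omega) (hU u hu.2 g)

end ZeroDimScheme

/-- Proposition 4.10 / `propSec3.10`.  Let `𝕏 ⊆ ℙⁿ_K` be a
0-dimensional locally Gorenstein scheme, `0 ≤ d ≤ r_𝕏 - 1`, and `σ` a homogeneous
trace map of degree zero of `Q^h(R)/L₀`.  If for every `p_j ∈ Supp 𝕏` every maximal
`p_j`-subscheme `𝕐_j ⊆ 𝕏` satisfies `x₀^d·(I_{𝕐_j/𝕏})_{r_𝕏} ⊄ (δ^σ_𝕏)_{r_𝕏+d}`,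
then `𝕏` has `CBP(d)`.  In particular, if `HF_{δ^σ_𝕏}(r_𝕏 + d) = 0` then `𝕏` has
`CBP(d)`.  (Under the degreewise identification, the subspace
`x₀^d·(I_{𝕐_j/𝕏})_{r_𝕏}` of the degree-`r_𝕏+d` part of `Q^h(R)` is
`(I_{𝕐_j/𝕏})_{r_𝕏} ⊆ Γ`.) -/
theorem dedekind_CB_stmt8 (K : Type) [Field K] (n : ℕ) (S : ZeroDimScheme K n)
    (τ : ∀ j, (S.pt j).carrier →ₗ[K] K) (hτ : S.IsTraceFamily τ)
    (d : ℕ) (hd : d + 1 ≤ S.rX) :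
    ((∀ (j : Fin S.s) (sj : (S.pt j).carrier), S.IsSocle j sj → sj ≠ 0 →
        ¬ (S.IY j sj S.rX ≤ S.delta τ ((S.rX : ℤ) + (d : ℤ)))) → S.CBP d) ∧
    (S.HFdelta τ ((S.rX : ℤ) + (d : ℤ)) = 0 → S.CBP d) := by
  refine ⟨S.aux_main τ hτ d, fun h0 => S.aux_main τ hτ d fun j sj _ h2 hle => h2 ?_⟩
  have hbot : S.delta τ ((S.rX : ℤ) + (d : ℤ)) = ⊥ := Submodule.finrank_eq_zero.1 h0
  have hm : (Pi.single j sj : S.Gamma) ∈ S.IY j sj S.rX :=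
    ⟨by rw [S.aux_V_rX]; trivial, Ideal.subset_span rfl⟩
  have h3 := hle hm
  rw [hbot, Submodule.mem_bot] at h3
  have h4 := congrFun h3 j
  rwa [Pi.single_eq_same] at h4
end

section
/- Let 𝕏 ⊆ ℙ^n_K be a 0-dimensional locally Gorenstein scheme and σ a homogeneous trace map of degree zero of Q^h(R)/L_0. Then 𝔉_{R̃/R}^2 ⊆ δ^σ_𝕏 ⊆ 𝔉_{R̃/R}. -/
theorem dedekind_aux_delta {K : Type} [Field K] {n : ℕ} (S : ZeroDimScheme K n)
    (τ : ∀ j, (S.pt j).carrier →ₗ[K] K) (i : ℤ) (f : S.Gamma) :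
    f ∈ S.delta τ i ↔ ∀ (k : ℤ), ∀ g ∈ S.Cmod τ k, f * g ∈ S.Vz (i + k) := by
  simp [ZeroDimScheme.delta]

theorem dedekind_aux_Cmod {K : Type} [Field K] {n : ℕ} (S : ZeroDimScheme K n)
    (τ : ∀ j, (S.pt j).carrier →ₗ[K] K) (k : ℤ) (g : S.Gamma) :
    g ∈ S.Cmod τ k ↔ ∀ i : ℕ, k + (i : ℤ) < 0 → ∀ x ∈ S.V i, S.Ttot τ (g * x) = 0 := by
  simp [ZeroDimScheme.Cmod]

theorem dedekind_aux_zero {K : Type} [Field K] {n : ℕ} (S : ZeroDimScheme K n)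
    (τ : ∀ j, (S.pt j).carrier →ₗ[K] K) (g : S.Gamma) : g ∈ S.Cmod τ 0 := by
  rw [dedekind_aux_Cmod]
  intro i hi
  omega

theorem dedekind_aux_mono {K : Type} [Field K] {n : ℕ} (S : ZeroDimScheme K n)
    {a b : ℕ} (h : a ≤ b) : S.V a ≤ S.V b := by
  rintro _ ⟨F, hF, rfl⟩
  refine ⟨F * MvPolynomial.X 0 ^ (b - a), ?_, ?_⟩
  · have h1 : MvPolynomial.IsHomogeneous F a := hF
    have h2 := h1.mul ((MvPolynomial.isHomogeneous_X K (0 : Fin (n + 1))).pow (b - a))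
    have h3 : a + 1 * (b - a) = b := by omega
    rw [h3] at h2
    exact h2
  · simp [S.germ_X0]

theorem dedekind_aux_nondeg {K : Type} [Field K] {n : ℕ} (S : ZeroDimScheme K n)
    (τ : ∀ j, (S.pt j).carrier →ₗ[K] K) (hτ : S.IsTraceFamily τ) (u : S.Gamma)
    (hu : ∀ y, S.Ttot τ (u * y) = 0) : u = 0 := by
  funext j
  apply (hτ j).1
  ext c
  have h := hu (Pi.single j c)
  rw [ZeroDimScheme.Ttot, LinearMap.sum_apply, Finset.sum_eq_single j] at h
  · simpa [mul_comm] using h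
  · intro k _ hk
    simp [Pi.single_eq_of_ne hk]
  · simp

/-- Proposition 5.3 / `propSec4.3`.  Let `𝕏 ⊆ ℙⁿ_K` be a
0-dimensional locally Gorenstein scheme and `σ` a homogeneous trace map of degree
zero of `Q^h(R)/L₀`.  Then `𝔉_{R̃/R}² ⊆ δ^σ_𝕏 ⊆ 𝔉_{R̃/R}`, degreewise: every
degree-`i` component of `𝔉²` (i.e. `Σ_{a+b=i} 𝔉_a·𝔉_b`) is contained in
`(δ^σ_𝕏)_i`, the different vanishes in negative degrees (where `𝔉 ⊆ R̃` vanishes),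
and `(δ^σ_𝕏)_i ⊆ 𝔉_i` for all `i ≥ 0`. -/
theorem dedekind_CB_stmt9 (K : Type) [Field K] (n : ℕ) (S : ZeroDimScheme K n)
    (τ : ∀ j, (S.pt j).carrier →ₗ[K] K) (hτ : S.IsTraceFamily τ) :
    (∀ i : ℕ, (⨆ (a : ℕ) (b : ℕ) (_ : a + b = i), S.cond a * S.cond b) ≤
      S.delta τ (i : ℤ)) ∧
    (∀ i : ℤ, i < 0 → S.delta τ i = ⊥) ∧
    (∀ i : ℕ, S.delta τ (i : ℤ) ≤ S.cond i) := by
  refine ⟨fun i => ?_, fun i hi => ?_, fun i f hf => ?_⟩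
  · refine iSup_le fun a => iSup_le fun b => iSup_le fun hab => ?_
    rw [Submodule.mul_le]
    intro f hf h hh
    have hf' : ∀ y, f * y ∈ S.V a := by simpa [ZeroDimScheme.cond] using hf
    have hh' : ∀ y, h * y ∈ S.V b := by simpa [ZeroDimScheme.cond] using hh
    rw [dedekind_aux_delta]
    intro k g hg
    subst hab
    rw [mul_assoc]
    by_cases hk : 0 ≤ (b : ℤ) + k
    · have h0 : 0 ≤ ((a + b : ℕ) : ℤ) + k := by push_cast; omega
      rw [ZeroDimScheme.Vz, if_pos h0]
      exact dedekind_aux_mono S (by omega) (hf' _)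
    · have hz : h * g = 0 := by
        apply dedekind_aux_nondeg S τ hτ
        intro y
        rw [dedekind_aux_Cmod] at hg
        have := hg b (by omega) (h * y) (hh' y)
        rw [← this]
        congr 1
        ring
      rw [hz, mul_zero]
      exact Submodule.zero_mem _
  · rw [eq_bot_iff]
    intro f hf
    rw [dedekind_aux_delta] at hf
    have := hf 0 1 (dedekind_aux_zero S τ 1)
    rw [ZeroDimScheme.Vz, if_neg (by omega)] at this
    simpa using this
  · rw [dedekind_aux_delta] at hf
    have key : ∀ y, f * y ∈ S.V i := fun y => by
      simpa [ZeroDimScheme.Vz] using hf 0 y (dedekind_aux_zero S τ y)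
    simpa [ZeroDimScheme.cond] using key
end

section
/- Let 𝕏 ⊆ ℙ^n_K be a 0-dimensional locally Gorenstein scheme. If 𝕏 is an almost Gorenstein scheme, then 𝕏 is a nearly Gorenstein scheme and HF_{δ^σ_𝕏}(r_𝕏 + 1) = HF_𝕏(1). -/
/-- Proposition 6.6 / `propSec5.06`.  Let `𝕏 ⊆ ℙⁿ_K` be a
0-dimensional locally Gorenstein scheme (with trace family `τ` inducing `σ`).  If
`𝕏` is an almost Gorenstein scheme, then `𝕏` is a nearly Gorenstein scheme and
`HF_{δ^σ_𝕏}(r_𝕏 + 1) = HF_𝕏(1)`. -/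
theorem dedekind_CB_stmt15 (K : Type) [Field K] (n : ℕ) (S : ZeroDimScheme K n)
    (τ : ∀ j, (S.pt j).carrier →ₗ[K] K) (hτ : S.IsTraceFamily τ)
    (hAG : S.AlmostGorenstein τ) :
    S.NearlyGorenstein τ ∧ S.HFdelta τ ((S.rX : ℤ) + 1) = S.HF 1 := by
  obtain ⟨g, hg, hinj, hm⟩ := hAG
  obtain ⟨N, hN⟩ := S.eventually_surj
  have hVN : S.V N = ⊤ := hN N le_rfl
  have hinj' : Function.Injective (LinearMap.mulRight K g) := by
    rw [← LinearMap.ker_eq_bot, LinearMap.ker_eq_bot']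
    intro x hx
    refine hinj N x ?_ (by simpa using hx)
    rw [hVN]
    exact Submodule.mem_top
  obtain ⟨u, hu⟩ := (LinearMap.injective_iff_surjective.mp hinj') 1
  have hu' : u * g = 1 := by simpa using hu
  have hVz : ∀ a : ℕ, S.Vz (a : ℤ) = S.V a := by
    intro a
    simp [ZeroDimScheme.Vz]
  have hdelta : ∀ a : ℕ, 1 ≤ a → ∀ x ∈ S.V a, x * u ∈ S.delta τ ((a : ℤ) + S.rX) := by
    intro a ha x hx
    simp only [ZeroDimScheme.delta, Submodule.mem_iInf, Submodule.mem_comap,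
      LinearMap.mulRight_apply]
    intro k h hh
    obtain ⟨y, hy, hyx⟩ := hm a ha x hx k h hh
    have hyx' : y * g = x * h := by simpa using hyx
    have e : x * u * h = y := by
      calc x * u * h = (x * h) * u := by ring
        _ = y * (u * g) := by rw [← hyx']; ring
        _ = y := by rw [hu', mul_one]
    rw [e]
    have : (a : ℤ) + S.rX + k = (a : ℤ) + k + S.rX := by ring
    rw [this]
    exact hy
  constructor
  · intro i hi x hx
    lift i to ℕ using by omega
    rw [hVz] at hx
    have e : x = (x * u) * g := by rw [mul_assoc, hu', mul_one]
    rw [e]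
    have hmem := Submodule.mul_mem_mul (hdelta i (by omega) x hx) hg
    refine Submodule.mem_iSup_of_mem ((i : ℤ) + S.rX) ?_
    refine Submodule.mem_iSup_of_mem (-(S.rX : ℤ)) ?_
    exact Submodule.mem_iSup_of_mem (by ring) hmem
  · have hmap : Submodule.map (LinearMap.mulRight K g) (S.delta τ ((S.rX : ℤ) + 1)) = S.V 1 := by
      apply le_antisymm
      · rintro _ ⟨f, hf, rfl⟩
        have hf' : f ∈ S.delta τ ((S.rX : ℤ) + 1) := hf
        simp only [ZeroDimScheme.delta, Submodule.mem_iInf, Submodule.mem_comap] at hf'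
        have h1 := hf' _ g hg
        have e : (S.rX : ℤ) + 1 + -(S.rX : ℤ) = ((1 : ℕ) : ℤ) := by push_cast; ring
        rw [e, hVz] at h1
        exact h1
      · intro x hx
        refine ⟨x * u, ?_, ?_⟩
        · have h1 := hdelta 1 le_rfl x hx
          have e : ((1 : ℕ) : ℤ) + S.rX = (S.rX : ℤ) + 1 := by push_cast; ring
          rw [e] at h1
          exact h1
        · rw [LinearMap.mulRight_apply, mul_assoc, hu', mul_one]
    unfold ZeroDimScheme.HFdelta ZeroDimScheme.HF
    rw [← hmap]
    exact (Submodule.equivMapOfInjective _ hinj' _).finrank_eq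
end
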